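/- Let μ, ν be probability measures on ℝ^d and σ > 0, with γ_σ = N(0, σ²·I_d). Then JS(μ ∗ γ_σ ‖ ν ∗ γ_σ) = 0 if and only if μ = ν, where JS denotes the Jensen–Shannon divergence. -/

import Mathlib

open MeasureTheory Real
open scoped ENNReal Classical

/-- The isotropic centered Gaussian measure `N(0, σ²·I_d)` on `ℝ^d`, given by its
density `(2πσ²)^(-d/2) · exp(-‖x‖²/(2σ²))` with respect to Lebesgue measure. -/
noncomputable def gaussianIso (d : ℕ) (σ : ℝ) : Measure (EuclideanSpace ℝ (Fin d)) :=
  volume.withDensity fun x =>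
    ENNReal.ofReal ((2 * π * σ ^ 2) ^ (-(d : ℝ) / 2) * Real.exp (-‖x‖ ^ 2 / (2 * σ ^ 2)))

/-- The Kullback–Leibler divergence `KL(P‖Q) = ∫ log (dP/dQ) dP` when `P ≪ Q`
(and the integral makes sense), and `+∞` otherwise. -/
noncomputable def KL {α : Type*} [MeasurableSpace α] (P Q : Measure α) : ℝ≥0∞ :=
  if P ≪ Q ∧ Integrable (fun x => Real.log (P.rnDeriv Q x).toReal) P then
    ENNReal.ofReal (∫ x, Real.log (P.rnDeriv Q x).toReal ∂P) else ⊤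

/-- The Jensen–Shannon divergence `JS(P‖Q) = ½·KL(P‖m) + ½·KL(Q‖m)` where
`m = ½·P + ½·Q` is the equal-weight mixture. -/
noncomputable def JS {α : Type*} [MeasurableSpace α] (P Q : Measure α) : ℝ≥0∞ :=
  2⁻¹ * KL P ((2 : ℝ≥0∞)⁻¹ • P + (2 : ℝ≥0∞)⁻¹ • Q) +
    2⁻¹ * KL Q ((2 : ℝ≥0∞)⁻¹ • P + (2 : ℝ≥0∞)⁻¹ • Q)

/-!
For finite measures, Gibbs' inequality says that the divergence from `P` to a measure of no larger
mass vanishes only at `P`. Applied to the heavier of `P` and `Q` and their average, it shows that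
`JS P Q = 0` forces `P = Q`. So `JS (μ ∗ κ) (ν ∗ κ) = 0` amounts to `μ ∗ κ = ν ∗ κ`, that is,
`charFun μ * charFun κ = charFun ν * charFun κ`, and a noise `κ` whose characteristic function has
no zeros can be cancelled. For the Gaussian, that function is `exp (-σ²‖t‖²/2)`.
-/

open InformationTheory

section Divergence

variable {α : Type*} [MeasurableSpace α]

lemma KL_eq_ite_llr (P Q : Measure α) :
    KL P Q = if P ≪ Q ∧ Integrable (llr P Q) P then ENNReal.ofReal (∫ x, llr P Q x ∂P) else ∞ :=
  rfl

-- `klDiv` adds the correction `Q univ - P univ` to `∫ llr P Q ∂P`; here that correction is `≤ 0`.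
lemma klDiv_le_KL {P Q : Measure α} [IsFiniteMeasure P] (hmass : Q Set.univ ≤ P Set.univ) :
    klDiv P Q ≤ KL P Q := by
  have hreal : Q.real Set.univ ≤ P.real Set.univ :=
    ENNReal.toReal_mono (measure_ne_top P _) hmass
  rw [klDiv_def, KL_eq_ite_llr]
  split_ifs
  · exact ENNReal.ofReal_le_ofReal (by linarith)
  · exact le_rfl

lemma KL_self (P : Measure α) [SigmaFinite P] : KL P P = 0 := by
  rw [← klDiv_self P, klDiv_def, KL_eq_ite_llr, add_sub_cancel_right]

lemma KL_eq_zero_iff {P Q : Measure α} [IsFiniteMeasure P] [IsFiniteMeasure Q]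
    (hmass : Q Set.univ ≤ P Set.univ) : KL P Q = 0 ↔ P = Q where
  mp hKL := klDiv_eq_zero_iff.mp (le_antisymm (hKL ▸ klDiv_le_KL hmass) zero_le)
  mpr hPQ := hPQ ▸ KL_self P

lemma JS_comm (P Q : Measure α) : JS P Q = JS Q P := by
  rw [JS, JS, add_comm, add_comm ((2 : ℝ≥0∞)⁻¹ • P)]

lemma inv_two_smul_add_inv_two_smul_self (P : Measure α) :
    (2 : ℝ≥0∞)⁻¹ • P + (2 : ℝ≥0∞)⁻¹ • P = P := by
  rw [← add_smul, ENNReal.inv_two_add_inv_two, one_smul]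

lemma JS_self (P : Measure α) [SigmaFinite P] : JS P P = 0 := by
  rw [JS, inv_two_smul_add_inv_two_smul_self, KL_self, mul_zero, add_zero]

lemma eq_of_eq_inv_two_smul_add_inv_two_smul {P Q : Measure α} [IsFiniteMeasure P]
    (h : P = (2 : ℝ≥0∞)⁻¹ • P + (2 : ℝ≥0∞)⁻¹ • Q) : P = Q := by
  have := Measure.smul_finite P (c := (2 : ℝ≥0∞)⁻¹) (by simp)
  have hhalf : (2 : ℝ≥0∞)⁻¹ • P = (2 : ℝ≥0∞)⁻¹ • Q :=
    (Measure.add_right_inj _ _ _).mp ((inv_two_smul_add_inv_two_smul_self P).trans h)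
  rw [← inv_two_smul_add_inv_two_smul_self P, hhalf, inv_two_smul_add_inv_two_smul_self]

theorem JS_eq_zero_iff (P Q : Measure α) [IsFiniteMeasure P] [IsFiniteMeasure Q] :
    JS P Q = 0 ↔ P = Q := by
  refine ⟨fun hJS => ?_, fun hPQ => hPQ ▸ JS_self P⟩
  wlog hmass : Q Set.univ ≤ P Set.univ generalizing P Q
  · exact (this Q P (JS_comm P Q ▸ hJS) (le_of_not_ge hmass)).symm
  have := Measure.smul_finite P (c := (2 : ℝ≥0∞)⁻¹) (by simp)
  have := Measure.smul_finite Q (c := (2 : ℝ≥0∞)⁻¹) (by simp)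
  have hmass_mixture : ((2 : ℝ≥0∞)⁻¹ • P + (2 : ℝ≥0∞)⁻¹ • Q) Set.univ ≤ P Set.univ := calc
    2⁻¹ * P Set.univ + 2⁻¹ * Q Set.univ ≤ 2⁻¹ * P Set.univ + 2⁻¹ * P Set.univ := by gcongr
    _ = P Set.univ := by rw [← add_mul, ENNReal.inv_two_add_inv_two, one_mul]
  have hKL : KL P ((2 : ℝ≥0∞)⁻¹ • P + (2 : ℝ≥0∞)⁻¹ • Q) = 0 :=
    (mul_eq_zero.mp (add_eq_zero.mp hJS).1).resolve_left (by simp)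
  exact eq_of_eq_inv_two_smul_add_inv_two_smul ((KL_eq_zero_iff hmass_mixture).mp hKL)

end Divergence

section Convolution

variable {E : Type*} [NormedAddCommGroup E] [InnerProductSpace ℝ E] [CompleteSpace E]
  [SecondCountableTopology E] [MeasurableSpace E] [BorelSpace E]
  {κ : Measure E} [IsFiniteMeasure κ]

lemma conv_right_inj_of_charFun_ne_zero (hκ : ∀ t, charFun κ t ≠ 0)
    {μ ν : Measure E} [IsFiniteMeasure μ] [IsFiniteMeasure ν] :
    μ.conv κ = ν.conv κ ↔ μ = ν := by
  refine ⟨fun h => Measure.ext_of_charFun (funext fun t => ?_), fun h => h ▸ rfl⟩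
  have hmul : charFun μ t * charFun κ t = charFun ν t * charFun κ t := by
    rw [← charFun_conv, ← charFun_conv, h]
  exact mul_right_cancel₀ (hκ t) hmul

theorem spreadJS_eq_zero_iff_general (hκ : ∀ t, charFun κ t ≠ 0)
    (μ ν : Measure E) [IsFiniteMeasure μ] [IsFiniteMeasure ν] :
    JS (μ.conv κ) (ν.conv κ) = 0 ↔ μ = ν :=
  (JS_eq_zero_iff _ _).trans (conv_right_inj_of_charFun_ne_zero hκ)

end Convolution

section Gaussian

variable {d : ℕ} {σ : ℝ}

lemma integral_cexp_neg_sq_norm_div_add_inner_mul_I {V : Type*} [NormedAddCommGroup V]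
    [InnerProductSpace ℝ V] [FiniteDimensional ℝ V] [MeasurableSpace V] [BorelSpace V]
    (hσ : σ ≠ 0) (t : V) :
    ∫ x : V, Complex.exp (-‖x‖ ^ 2 / (2 * σ ^ 2) + inner ℝ x t * Complex.I) =
      ((2 * π * σ ^ 2) ^ ((Module.finrank ℝ V : ℝ) / 2) : ℝ) *
        Complex.exp (-σ ^ 2 * ‖t‖ ^ 2 / 2) := by
  have hre : 0 < ((1 / (2 * σ ^ 2) : ℝ) : ℂ).re := by
    rw [Complex.ofReal_re]; positivity
  have hσ' : (σ : ℂ) ≠ 0 := Complex.ofReal_ne_zero.mpr hσ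
  have hfourier := GaussianFourier.integral_cexp_neg_mul_sq_norm_add hre Complex.I t
  convert hfourier using 1
  · congr! 3 with x
    rw [real_inner_comm]
    push_cast
    ring
  · rw [Complex.ofReal_cpow (by positivity), Complex.I_sq]
    push_cast
    congr 2 <;> field_simp
    ring

lemma charFun_gaussianIso (hσ : σ ≠ 0) (t : EuclideanSpace ℝ (Fin d)) :
    charFun (gaussianIso d σ) t = Complex.exp (-σ ^ 2 * ‖t‖ ^ 2 / 2) := by
  have hpos : 0 < 2 * π * σ ^ 2 := by positivity
  have hdensity (x : EuclideanSpace ℝ (Fin d)) :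
      (ENNReal.ofReal ((2 * π * σ ^ 2) ^ (-(d : ℝ) / 2) *
          Real.exp (-‖x‖ ^ 2 / (2 * σ ^ 2)))).toReal • Complex.exp (inner ℝ x t * Complex.I) =
        ((2 * π * σ ^ 2) ^ (-(d : ℝ) / 2) : ℝ) *
          Complex.exp (-‖x‖ ^ 2 / (2 * σ ^ 2) + inner ℝ x t * Complex.I) := by
    rw [ENNReal.toReal_ofReal (by positivity), Complex.real_smul, Complex.exp_add]
    push_cast
    ring
  have hnormalization :
      (2 * π * σ ^ 2) ^ (-(d : ℝ) / 2) * (2 * π * σ ^ 2) ^ ((d : ℝ) / 2) = 1 := by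
    rw [← Real.rpow_add hpos, neg_div, neg_add_cancel, Real.rpow_zero]
  rw [charFun_apply, gaussianIso,
    integral_withDensity_eq_integral_toReal_smul (by fun_prop) (by simp)]
  simp_rw [hdensity]
  rw [integral_const_mul, integral_cexp_neg_sq_norm_div_add_inner_mul_I hσ,
    finrank_euclideanSpace_fin, ← mul_assoc, ← Complex.ofReal_mul, hnormalization,
    Complex.ofReal_one, one_mul]

lemma isProbabilityMeasure_gaussianIso (hσ : σ ≠ 0) : IsProbabilityMeasure (gaussianIso d σ) := by
  have hmass : ((gaussianIso d σ).real Set.univ : ℂ) = 1 := by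
    rw [← charFun_zero, charFun_gaussianIso hσ]
    simp
  exact ⟨(ENNReal.toReal_eq_one_iff _).mp (Complex.ofReal_eq_one.mp hmass)⟩

end Gaussian

/-- Validity of the spread (single-kernel diffusive) JS divergence:
`JS(μ ∗ γ_σ ‖ ν ∗ γ_σ) = 0` iff `μ = ν`. -/
theorem spreadJS_eq_zero_iff {d : ℕ} {σ : ℝ} (hσ : 0 < σ)
    (μ ν : Measure (EuclideanSpace ℝ (Fin d)))
    [IsProbabilityMeasure μ] [IsProbabilityMeasure ν] :
    JS (μ.conv (gaussianIso d σ)) (ν.conv (gaussianIso d σ)) = 0 ↔ μ = ν := by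
  have := isProbabilityMeasure_gaussianIso (d := d) hσ.ne'
  exact spreadJS_eq_zero_iff_general
    (fun t => charFun_gaussianIso hσ.ne' t ▸ Complex.exp_ne_zero _) μ ν
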